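/- arXiv:math/0207031 — 2 statements merged into one kernel-verified Lean document; each statement's English description precedes it below -/
import Mathlib

section
/- (Perelomov–Popov formula for c̃_q.) Let V be a complex Lie module over gl(m,ℂ), let ρ = (ρ^1,…,ρ^m) ∈ ℤ^m with ρ^1 ≥ ρ^2 ≥ … ≥ ρ^m, and let v ∈ V satisfy e_{ij}·v = 0 for all i < j and e_{kk}·v = ρ^k v for all k. Then for every q ≥ 0, Σ_{k=1}^m ẽ_{kk}^q v = (Σ_{i=1}^m w_{+i}^q γ_{+i}) v, where w_{+i} := −ρ^i + (i − 1) and γ_{+i} := Π_{j≠i} (1 − 1/(w_{+i} − w_{+j})). -/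
open Finset

attribute [local instance 100] LieRing.ofAssociativeRing

/-- `gl(m, ℂ)`: the Lie algebra of `m × m` complex matrices. -/
abbrev glm (m : ℕ) := Matrix (Fin m) (Fin m) ℂ

/-- The operators `e_{kl}^q` on a `gl(m,ℂ)`-module `V`:
`e_{kl}^0 w = δ_{kl} w` and `e_{kl}^{q+1} w = Σ_i e_{ki}·(e_{il}^q w)`. -/
noncomputable def epowV {m : ℕ} {V : Type*} [AddCommGroup V]
    [LieRingModule (glm m) V] :
    ℕ → Fin m → Fin m → V → V
  | 0, k, l, w => if k = l then w else 0
  | q + 1, k, l, w => ∑ i, ⁅Matrix.single k i (1 : ℂ), epowV q i l w⁆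

/-- The operators `ẽ_{kl}^q` on a `gl(m,ℂ)`-module `V`:
`ẽ_{kl}^0 w = δ_{kl} w` and `ẽ_{kl}^{q+1} w = −Σ_i e_{ik}·(ẽ_{il}^q w)`. -/
noncomputable def etilV {m : ℕ} {V : Type*} [AddCommGroup V]
    [LieRingModule (glm m) V] :
    ℕ → Fin m → Fin m → V → V
  | 0, k, l, w => if k = l then w else 0
  | q + 1, k, l, w => -∑ i, ⁅Matrix.single i k (1 : ℂ), etilV q i l w⁆

/-- The `(1,0)`-conformal weight `w_{+i} = −ρ^i + (i − 1)` (here `i : Fin m` corresponds to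
the index `i+1` of the paper, so `w_{+i} = −ρ_i + i`). -/
noncomputable def wPlus (m : ℕ) (ρ : Fin m → ℤ) (i : Fin m) : ℂ :=
  -(ρ i : ℂ) + ((i : ℕ) : ℂ)

/-! As operators, `[e_{ab}, ẽ_{kl}^q] = δ_{bl} ẽ_{ka}^q − δ_{ka} ẽ_{bl}^q`. On a highest weight
vector this makes `ẽ^q` triangular, and its diagonal entries `x_l(q)` satisfy `x_l(0) = 1` and
`x_l(q+1) = w_l x_l(q) − ∑_{i<l} x_i(q)`.

Let `p_s(q) = ∑_{i∈s} w_i^q ∏_{j∈s, j≠i} (1 − 1/(w_i − w_j))`. Enlarging `s` by `a` multiplies the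
`i`-th product by `1 − 1/(w_i − w_a)`, so the increments `p_{≤l}(q) − p_{<l}(q)` satisfy the same
recursion. They have the same initial values because `p_s(0) = #s`. Hence they are the `x_l(q)`,
and the sum over `l` telescopes. -/

section PerelomovPopovSum

variable {ι F : Type*} [DecidableEq ι] [Field F]

/-- The Perelomov–Popov coefficient `γ_i = ∏_{j ≠ i} (1 - 1 / (w_i - w_j))` of a family of
nodes `w`, taken over a finite set `s` of indices so that it can be compared for different `s`. -/
def perelomovPopovCoeff (w : ι → F) (s : Finset ι) (i : ι) : F :=
  ∏ j ∈ s.erase i, (1 - 1 / (w i - w j))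

/-- The Perelomov–Popov sum `∑_i w_i ^ q γ_i` over a finite set `s` of indices. -/
def perelomovPopovSum (w : ι → F) (s : Finset ι) (q : ℕ) : F :=
  ∑ i ∈ s, w i ^ q * perelomovPopovCoeff w s i

theorem perelomovPopovSum_empty (w : ι → F) (q : ℕ) : perelomovPopovSum w ∅ q = 0 :=
  sum_empty

theorem perelomovPopovCoeff_insert (w : ι → F) {s : Finset ι} {a i : ι} (ha : a ∉ s)
    (hai : a ≠ i) :
    perelomovPopovCoeff w (insert a s) i =
      (1 - 1 / (w i - w a)) * perelomovPopovCoeff w s i := by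
  rw [perelomovPopovCoeff, erase_insert_of_ne hai,
    prod_insert fun h ↦ ha (mem_of_mem_erase h), perelomovPopovCoeff]

open Polynomial in
theorem perelomovPopovSum_zero {w : ι → F} {s : Finset ι} (hw : Set.InjOn w s) :
    perelomovPopovSum w s 0 = #s := by
  rcases s.eq_empty_or_nonempty with rfl | hs
  · simp [perelomovPopovSum]
  -- By Lagrange interpolation the coefficient of `P` in degree `#s - 1` is `∑ i ∈ s, γ_i`.
  let P : F[X] := Lagrange.nodal s w - Lagrange.nodal s (fun i ↦ w i + 1)
  have degree_P : P.degree < #s := by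
    rw [← Lagrange.degree_nodal (s := s) (v := w)]
    exact degree_sub_lt_left (by simp only [Lagrange.degree_nodal]) Lagrange.nodal_ne_zero
      (by rw [Lagrange.nodal_monic, Lagrange.nodal_monic])
  have coeff_P : P.coeff (#s - 1) = #s := by
    simp only [P, coeff_sub, Lagrange.nodal_eq, prod_X_sub_C_coeff_card_pred s _ hs.card_pos,
      sum_add_distrib, sum_const, nsmul_one]
    ring
  have eval_P : ∀ i ∈ s, P.eval (w i) = ∏ j ∈ s.erase i, (w i - w j - 1) := by
    intro i hi
    rw [eval_sub, Lagrange.eval_nodal_at_node hi, Lagrange.eval_nodal, ← mul_prod_erase s _ hi]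
    simp only [sub_add_eq_sub_sub, sub_self, zero_sub, neg_mul, one_mul, neg_neg]
  rw [← coeff_P, Lagrange.coeff_eq_sum hw degree_P, perelomovPopovSum]
  refine sum_congr rfl fun i hi ↦ ?_
  rw [eval_P i hi, ← prod_div_distrib, pow_zero, one_mul, perelomovPopovCoeff]
  refine prod_congr rfl fun j hj ↦ ?_
  obtain ⟨hji, hj⟩ := mem_erase.mp hj
  rw [sub_div, div_self (sub_ne_zero.mpr fun h ↦ hji (hw hj hi h.symm))]

theorem perelomovPopovSum_insert_succ_sub {w : ι → F} {s : Finset ι} {a : ι}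
    (ha : ∀ i ∈ s, w i ≠ w a) (q : ℕ) :
    perelomovPopovSum w (insert a s) (q + 1) - perelomovPopovSum w s (q + 1) =
      w a * (perelomovPopovSum w (insert a s) q - perelomovPopovSum w s q) -
        perelomovPopovSum w s q := by
  have a_notMem : a ∉ s := fun h ↦ ha a h rfl
  have coeff_insert : ∀ i ∈ s, (w i - w a) * perelomovPopovCoeff w (insert a s) i =
      (w i - w a - 1) * perelomovPopovCoeff w s i := by
    intro i hi
    have hia := sub_ne_zero.mpr (ha i hi)
    rw [perelomovPopovCoeff_insert w a_notMem (ne_of_mem_of_not_mem hi a_notMem).symm]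
    field_simp
  have sum_sub_sum : ∑ i ∈ s, w i ^ (q + 1) * perelomovPopovCoeff w (insert a s) i -
        ∑ i ∈ s, w i ^ (q + 1) * perelomovPopovCoeff w s i =
      w a * (∑ i ∈ s, w i ^ q * perelomovPopovCoeff w (insert a s) i -
        ∑ i ∈ s, w i ^ q * perelomovPopovCoeff w s i) -
        ∑ i ∈ s, w i ^ q * perelomovPopovCoeff w s i := by
    rw [← sum_sub_distrib, ← sum_sub_distrib, mul_sum, ← sum_sub_distrib]
    exact sum_congr rfl fun i hi ↦ by linear_combination w i ^ q * coeff_insert i hi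
  simp only [perelomovPopovSum, sum_insert a_notMem]
  linear_combination sum_sub_sum

end PerelomovPopovSum

theorem sum_Iic_sub_Iio_of_isLowerSet {ι M : Type*} [LinearOrder ι] [LocallyFiniteOrderBot ι]
    [AddCommGroup M] (f : Finset ι → M) {s : Finset ι} (hs : IsLowerSet (s : Set ι)) :
    ∑ i ∈ s, (f (Iic i) - f (Iio i)) = f s - f ∅ := by
  induction s using induction_on_max with
  | empty => rw [sum_empty, sub_self]
  | insert a s lt_a ih =>
    have s_eq : s = Iio a := by
      ext i
      refine ⟨fun hi ↦ mem_Iio.mpr (lt_a i hi), fun hi ↦ ?_⟩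
      have hia := mem_Iio.mp hi
      exact mem_of_mem_insert_of_ne (hs hia.le (mem_insert_self a s)) hia.ne
    subst s_eq
    rw [sum_insert notMem_Iio_self, ih (by simpa only [coe_Iio] using isLowerSet_Iio a), Iio_insert,
      sub_add_sub_cancel]

theorem lie_single_one_single_one {n R : Type*} [Fintype n] [DecidableEq n] [Ring R]
    (a b c d : n) :
    ⁅Matrix.single a b (1 : R), Matrix.single c d (1 : R)⁆ =
      (if b = c then Matrix.single a d 1 else 0) - (if d = a then Matrix.single c b 1 else 0) := by
  rw [LieRing.of_associative_ring_bracket]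
  congr 1 <;> split_ifs with h <;> simp [h]

section EtilV

variable {m : ℕ} {V : Type*} [AddCommGroup V] [LieRingModule (glm m) V]

theorem etilV_zero_right (q : ℕ) (k l : Fin m) : etilV q k l (0 : V) = 0 := by
  induction q generalizing k with
  | zero => simp only [etilV, ite_self]
  | succ q ih => simp only [etilV, ih, lie_zero, sum_const_zero, neg_zero]

theorem etilV_smul [Module ℂ V] [LieModule ℂ (glm m) V] (q : ℕ) (k l : Fin m) (c : ℂ) (w : V) :
    etilV q k l (c • w) = c • etilV q k l w := by
  induction q generalizing k with
  | zero => simp only [etilV, smul_ite, smul_zero]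
  | succ q ih => simp only [etilV, ih, lie_smul, smul_neg, smul_sum]

theorem lie_single_etilV (q : ℕ) (a b k l : Fin m) (w : V) :
    ⁅Matrix.single a b (1 : ℂ), etilV q k l w⁆ =
      etilV q k l ⁅Matrix.single a b (1 : ℂ), w⁆ +
        (if b = l then etilV q k a w else 0) - (if k = a then etilV q b l w else 0) := by
  induction q generalizing k l with
  | zero =>
    simp only [etilV]
    by_cases hkl : k = l <;> by_cases hbl : b = l <;> by_cases hka : k = a <;> simp_all
  | succ q ih =>
    have lie_term (i : Fin m) :
        ⁅Matrix.single a b (1 : ℂ), ⁅Matrix.single i k (1 : ℂ), etilV q i l w⁆⁆ =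
          (if b = i then ⁅Matrix.single a k (1 : ℂ), etilV q i l w⁆ else 0) -
          (if k = a then ⁅Matrix.single i b (1 : ℂ), etilV q i l w⁆ else 0) +
          (⁅Matrix.single i k (1 : ℂ), etilV q i l ⁅Matrix.single a b (1 : ℂ), w⁆⁆ +
            (if b = l then ⁅Matrix.single i k (1 : ℂ), etilV q i a w⁆ else 0) -
            (if i = a then ⁅Matrix.single i k (1 : ℂ), etilV q b l w⁆ else 0)) := by
      rw [leibniz_lie, lie_single_one_single_one, ih]
      split_ifs <;> simp only [sub_lie, zero_lie, lie_add, lie_sub, lie_zero]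
    simp only [etilV, lie_neg, lie_sum, lie_term, sum_add_distrib, sum_sub_distrib,
      sum_ite_eq, sum_ite_eq', mem_univ, if_true, sum_ite_irrel, sum_const_zero]
    split_ifs <;> abel

theorem lie_single_etilV_of_lie_eq_zero {i l : Fin m} {w : V}
    (hw : ⁅Matrix.single i l (1 : ℂ), w⁆ = 0) (q : ℕ) :
    ⁅Matrix.single i l (1 : ℂ), etilV q i l w⁆ = etilV q i i w - etilV q l l w := by
  rw [lie_single_etilV, hw, etilV_zero_right, if_pos rfl, if_pos rfl, zero_add]

variable {v : V} (hv : ∀ i j : Fin m, i < j → ⁅Matrix.single i j (1 : ℂ), v⁆ = 0)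
include hv

theorem etilV_eq_zero_of_lt (q : ℕ) {k l : Fin m} (hlk : l < k) : etilV q k l v = 0 := by
  induction q generalizing k with
  | zero => exact if_neg hlk.ne'
  | succ q ih =>
    rw [etilV, neg_eq_zero]
    refine sum_eq_zero fun i _ ↦ ?_
    rcases lt_or_ge l i with hli | hil
    · rw [ih hli, lie_zero]
    · rw [lie_single_etilV, hv i k (hil.trans_lt hlk), etilV_zero_right, ih hlk, if_neg hlk.ne',
        ite_self, add_zero, sub_zero]

variable [Module ℂ V] [LieModule ℂ (glm m) V]

theorem etilV_succ_self {c : ℂ} {l : Fin m}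
    (hl : ⁅Matrix.single l l (1 : ℂ), v⁆ = c • v) (q : ℕ) :
    etilV (q + 1) l l v = (-c + (l : ℕ)) • etilV q l l v - ∑ i ∈ Iio l, etilV q i i v := by
  have term_self : ⁅Matrix.single l l (1 : ℂ), etilV q l l v⁆ = c • etilV q l l v := by
    rw [lie_single_etilV, hl, etilV_smul, if_pos rfl, add_sub_cancel_right]
  have sum_Iic : ∑ i, ⁅Matrix.single i l (1 : ℂ), etilV q i l v⁆ =
      ∑ i ∈ Iic l, ⁅Matrix.single i l (1 : ℂ), etilV q i l v⁆ := by
    refine (sum_subset (subset_univ _) fun i _ hi ↦ ?_).symm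
    rw [etilV_eq_zero_of_lt hv q (by simpa using hi), lie_zero]
  have sum_Iio : ∑ i ∈ Iio l, ⁅Matrix.single i l (1 : ℂ), etilV q i l v⁆ =
      ∑ i ∈ Iio l, etilV q i i v - ((l : ℕ) : ℂ) • etilV q l l v := by
    rw [sum_congr rfl fun i hi ↦ lie_single_etilV_of_lie_eq_zero (hv i l (mem_Iio.mp hi)) q,
      sum_sub_distrib, sum_const, Fin.card_Iio, Nat.cast_smul_eq_nsmul]
  rw [etilV, sum_Iic, ← Iio_insert, sum_insert notMem_Iio_self, term_self, sum_Iio]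
  module

theorem etilV_self_eq_smul {μ w : Fin m → ℂ}
    (hμ : ∀ k : Fin m, ⁅Matrix.single k k (1 : ℂ), v⁆ = μ k • v)
    (hw : ∀ k, w k = -μ k + (k : ℕ)) (w_inj : Function.Injective w) (q : ℕ) (l : Fin m) :
    etilV q l l v = (perelomovPopovSum w (Iic l) q - perelomovPopovSum w (Iio l) q) • v := by
  induction q generalizing l with
  | zero =>
    rw [perelomovPopovSum_zero w_inj.injOn, perelomovPopovSum_zero w_inj.injOn, Fin.card_Iic,
      Fin.card_Iio, Nat.cast_add_one, add_sub_cancel_left, one_smul, etilV, if_pos rfl]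
  | succ q ih =>
    have sum_Iio : ∑ i ∈ Iio l, etilV q i i v = perelomovPopovSum w (Iio l) q • v := by
      simp only [ih]
      rw [← sum_smul, sum_Iic_sub_Iio_of_isLowerSet (perelomovPopovSum w · q)
        (by simpa only [coe_Iio] using isLowerSet_Iio l), perelomovPopovSum_empty, sub_zero]
    have ne_l : ∀ i ∈ Iio l, w i ≠ w l := fun i hi ↦ w_inj.ne (mem_Iio.mp hi).ne
    rw [etilV_succ_self hv (hμ l), ← hw, sum_Iio, ih, ← Iio_insert,
      perelomovPopovSum_insert_succ_sub ne_l]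
    module

end EtilV

theorem wPlus_injective {m : ℕ} {ρ : Fin m → ℤ} (hρ : Antitone ρ) :
    Function.Injective (wPlus m ρ) := by
  have strictMono_int : StrictMono fun i : Fin m ↦ -ρ i + ((i : ℕ) : ℤ) := fun i j hij ↦
    add_lt_add_of_le_of_lt (neg_le_neg (hρ hij.le)) (Int.ofNat_lt.mpr hij)
  intro i j hij
  refine strictMono_int.injective ?_
  simp only [wPlus] at hij
  exact_mod_cast hij

theorem statement7_general {m : ℕ} {V : Type*} [AddCommGroup V] [Module ℂ V]
    [LieRingModule (glm m) V] [LieModule ℂ (glm m) V] {v : V}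
    (hv : ∀ i j : Fin m, i < j → ⁅Matrix.single i j (1 : ℂ), v⁆ = 0) {μ w : Fin m → ℂ}
    (hμ : ∀ k : Fin m, ⁅Matrix.single k k (1 : ℂ), v⁆ = μ k • v)
    (hw : ∀ k, w k = -μ k + (k : ℕ)) (w_inj : Function.Injective w) (q : ℕ) :
    ∑ k : Fin m, etilV q k k v =
      (∑ i, w i ^ q * ∏ j ∈ univ.erase i, (1 - 1 / (w i - w j))) • v := by
  simp only [etilV_self_eq_smul hv hμ hw w_inj]
  rw [← sum_smul, sum_Iic_sub_Iio_of_isLowerSet (perelomovPopovSum w · q)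
    (by simpa only [coe_univ] using isLowerSet_univ), perelomovPopovSum_empty, sub_zero]
  simp only [perelomovPopovSum, perelomovPopovCoeff]

/-- Perelomov–Popov formula for `c̃_q`: on a highest weight vector of weight
`ρ` with `ρ^1 ≥ … ≥ ρ^m`, `Σ_k ẽ_{kk}^q` acts by `Σ_i w_{+i}^q γ_{+i}` with
`γ_{+i} = Π_{j≠i} (1 − 1/(w_{+i} − w_{+j}))`. -/
theorem statement7 (m : ℕ) (hm : 1 ≤ m) {V : Type*} [AddCommGroup V] [Module ℂ V]
    [LieRingModule (glm m) V] [LieModule ℂ (glm m) V]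
    (ρ : Fin m → ℤ) (hρ : ∀ i j : Fin m, i ≤ j → ρ j ≤ ρ i)
    (v : V)
    (hv1 : ∀ i j : Fin m, i < j → ⁅Matrix.single i j (1 : ℂ), v⁆ = 0)
    (hv2 : ∀ k : Fin m, ⁅Matrix.single k k (1 : ℂ), v⁆ = (ρ k : ℂ) • v)
    (q : ℕ) :
    ∑ k : Fin m, etilV (m := m) q k k v =
      (∑ i : Fin m, (wPlus m ρ i) ^ q *
        ∏ j ∈ Finset.univ.erase i, (1 - 1 / (wPlus m ρ i - wPlus m ρ j))) • v :=
  statement7_general hv1 hv2 (fun _ ↦ rfl) (wPlus_injective hρ) q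
end

section
/- For every q ≥ 0 there exist elements b_{q,0}, …, b_{q,q} of U(gl(m,ℂ)), each lying in the unital subalgebra generated by the Casimir elements {c_j : j ≥ 0} and independent of the indices k,l, such that ẽ_{kl}^q = Σ_{p=0}^q b_{q,p} · e_{lk}^p for all 1 ≤ k,l ≤ m (note the transposed indices l,k on the right-hand side). -/
open Finset

attribute [local instance 100] LieRing.ofAssociativeRing

/-- The universal enveloping algebra `U(gl(m,ℂ))`. -/
abbrev UEA (m : ℕ) := UniversalEnvelopingAlgebra ℂ (glm m)

/-- The image of the matrix unit `e_{kl}` in `U(gl(m,ℂ))`. -/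
noncomputable def E {m : ℕ} (k l : Fin m) : UEA m :=
  UniversalEnvelopingAlgebra.ι ℂ (Matrix.single k l (1 : ℂ))

/-- `e_{kl}^q`, defined by `e_{kl}^0 = δ_{kl}` and `e_{kl}^{q+1} = Σ_i e_{ki} e_{il}^q`. -/
noncomputable def Epow {m : ℕ} : ℕ → Fin m → Fin m → UEA m
  | 0, k, l => if k = l then 1 else 0
  | q + 1, k, l => ∑ i, E k i * Epow q i l

/-- `ẽ_{kl}^q`, defined by `ẽ_{kl}^0 = δ_{kl}` and `ẽ_{kl}^{q+1} = −Σ_i e_{ik} ẽ_{il}^q`. -/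
noncomputable def Etil {m : ℕ} : ℕ → Fin m → Fin m → UEA m
  | 0, k, l => if k = l then 1 else 0
  | q + 1, k, l => -∑ i, E i k * Etil q i l

/-- The Casimir element `c_q = Σ_k e_{kk}^q`. -/
noncomputable def Cas (m : ℕ) (q : ℕ) : UEA m := ∑ k : Fin m, Epow q k k

/-- The Casimir element `c̃_q = Σ_k ẽ_{kk}^q`. -/
noncomputable def CasT (m : ℕ) (q : ℕ) : UEA m := ∑ k : Fin m, Etil q k k

/-!
Call a matrix `N` over a ring `A` equivariant for a matrix `M` of generators of `gl_n` in `A` if its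
entries transform under commutators with those of `M` in the way the entries of `M` themselves do.
Equivariance is stable under products, so every power of `M` is equivariant, and the trace of an
equivariant matrix commutes with the entries of `M`.

The matrices `ẽ^q` are the powers of `-Mᵀ`, so that `(ẽ^(q+1))ᵀ = (-Mᵀ * ẽ^q)ᵀ`. For
equivariant `N`, moving the entries of `M` past those of `N` gives
`(-Mᵀ * Nᵀ)ᵀ = n • N - N * M - tr N • 1`. Hence `N ↦ (-Mᵀ * Nᵀ)ᵀ`, which is linear over the
Casimir elements, sends `M ^ p` into the span of `1, M, …, M ^ (p + 1)`, and the claim follows by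
induction on `q`.
-/

section Equivariance

open scoped Matrix

theorem matrix_mul_smul_of_commute {l m n A : Type*} [Fintype m] [NonUnitalSemiring A]
    {M : Matrix l m A} {z : A} (hz : ∀ i j, Commute (M i j) z) (N : Matrix m n A) :
    M * (z • N) = z • (M * N) := by
  ext i k
  simp only [Matrix.mul_apply, Matrix.smul_apply, smul_eq_mul, mul_sum, ← mul_assoc, (hz _ _).eq]

variable {n A : Type*} [DecidableEq n] [Ring A]

/-- `N` is `gl_n`-equivariant for `M`: commutators with the entries of `M` act on the entries of `N`
as `ad e_{ij}` acts on the matrix units `e_{kl}`. In particular `GlEquivariant M M` says that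
`e_{ij} ↦ M i j` respects the brackets of `gl_n`. -/
def GlEquivariant (M N : Matrix n n A) : Prop :=
  ∀ i j k l, ⁅M i j, N k l⁆ = (if j = k then N i l else 0) - (if i = l then N k j else 0)

namespace GlEquivariant

variable {M N N' : Matrix n n A}

theorem one : GlEquivariant M 1 := by
  intro i j k l
  have hcomm : ⁅M i j, (1 : Matrix n n A) k l⁆ = 0 := by
    rw [Matrix.one_apply]
    split_ifs <;> simp [Ring.lie_def]
  rw [hcomm]
  simp only [Matrix.one_apply]
  grind

variable [Fintype n]

theorem mul (hN : GlEquivariant M N) (hN' : GlEquivariant M N') : GlEquivariant M (N * N') := by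
  intro i j k l
  have leibniz : ∀ a, ⁅M i j, N k a * N' a l⁆ =
      ⁅M i j, N k a⁆ * N' a l + N k a * ⁅M i j, N' a l⁆ := by
    intro a
    simp only [Ring.lie_def]
    noncomm_ring
  simp only [Matrix.mul_apply, lie_sum, leibniz, hN i j, hN' i j, sub_mul, mul_sub, ite_mul,
    mul_ite, zero_mul, mul_zero, sum_add_distrib, sum_sub_distrib, sum_ite_irrel, sum_const_zero,
    sum_ite_eq, mem_univ, if_true]
  abel

theorem pow (hM : GlEquivariant M M) (p : ℕ) : GlEquivariant M (M ^ p) := by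
  induction p with
  | zero => simpa only [pow_zero] using one
  | succ p ih => simpa only [pow_succ] using ih.mul hM

theorem commute_trace (hN : GlEquivariant M N) (i j : n) : Commute (M i j) N.trace := by
  rw [commute_iff_lie_eq, Matrix.trace, lie_sum]
  simp [hN i j]

theorem transpose_neg_transpose_mul_transpose (hN : GlEquivariant M N) :
    (-Mᵀ * Nᵀ)ᵀ = Fintype.card n • N - N * M - N.trace • 1 := by
  ext l k
  have swap : ∀ i, M i k * N l i = N l i * M i k + ((if k = l then N i i else 0) - N l k) := by
    intro i
    rw [← sub_eq_iff_eq_add', ← Ring.lie_def, hN i k l i, if_pos rfl]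
  simp only [neg_mul, Matrix.transpose_apply, Matrix.neg_apply, Matrix.mul_apply, swap,
    sum_add_distrib, sum_sub_distrib, sum_ite_irrel, sum_const_zero, sum_const, card_univ,
    Matrix.trace, Matrix.diag_apply, Matrix.sub_apply, Matrix.smul_apply, Matrix.one_apply,
    eq_comm (a := l), smul_eq_mul, mul_ite, mul_one, mul_zero]
  abel

end GlEquivariant

variable [Fintype n] {M : Matrix n n A}

/-- The algebra generated by the Casimir elements `tr (M ^ j)` of `M`. -/
def casimirSubalgebra (R : Type*) [CommRing R] [Algebra R A] (M : Matrix n n A) : Subalgebra R A :=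
  Algebra.adjoin R (Set.range fun j => (M ^ j).trace)

variable {R : Type*} [CommRing R] [Algebra R A]

theorem trace_pow_mem_casimirSubalgebra (M : Matrix n n A) (p : ℕ) :
    (M ^ p).trace ∈ casimirSubalgebra R M :=
  Algebra.subset_adjoin ⟨p, rfl⟩

theorem GlEquivariant.commute_of_mem_casimirSubalgebra (hM : GlEquivariant M M) {z : A}
    (hz : z ∈ casimirSubalgebra R M) (i j : n) : Commute (M i j) z := by
  refine Algebra.commute_of_mem_adjoin_of_forall_mem_commute hz ?_
  rintro _ ⟨p, rfl⟩
  exact (hM.pow p).commute_trace i j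

/-- The matrices `∑ p ≤ q, b p • M ^ p` whose coefficients `b p` are polynomials in the Casimir
elements. -/
def casimirSpan (R : Type*) [CommRing R] [Algebra R A] (M : Matrix n n A) (q : ℕ) :
    Submodule (casimirSubalgebra R M) (Matrix n n A) :=
  Submodule.span _ ((M ^ ·) '' (range (q + 1) : Set ℕ))

theorem pow_mem_casimirSpan (M : Matrix n n A) {p q : ℕ} (hpq : p ≤ q) :
    M ^ p ∈ casimirSpan R M q :=
  Submodule.subset_span ⟨p, by simpa using Nat.lt_succ_of_le hpq, rfl⟩

theorem GlEquivariant.transpose_neg_transpose_mul_transpose_mem (hM : GlEquivariant M M) {q : ℕ}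
    {N : Matrix n n A} (hN : N ∈ casimirSpan R M q) :
    (-Mᵀ * Nᵀ)ᵀ ∈ casimirSpan R M (q + 1) := by
  induction hN using Submodule.span_induction with
  | mem N hN =>
    obtain ⟨p, hp, rfl⟩ := hN
    have hpq : p ≤ q := by simpa [Nat.lt_succ_iff] using hp
    have htrace : (M ^ p).trace • (1 : Matrix n n A) ∈ casimirSpan R M (q + 1) :=
      Submodule.smul_mem _ (⟨_, trace_pow_mem_casimirSubalgebra M p⟩ : casimirSubalgebra R M)
        (by simpa only [pow_zero] using pow_mem_casimirSpan M (Nat.zero_le (q + 1)))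
    simp only [(hM.pow p).transpose_neg_transpose_mul_transpose, ← pow_succ]
    exact sub_mem (sub_mem (nsmul_mem (pow_mem_casimirSpan M (by lia)) _)
      (pow_mem_casimirSpan M (by lia))) htrace
  | zero => simp
  | add N N' _ _ ih ih' =>
    simpa only [Matrix.transpose_add, mul_add] using add_mem ih ih'
  | smul z N _ ih =>
    have hz : ∀ i j, Commute ((-Mᵀ) i j) z := fun i j =>
      (hM.commute_of_mem_casimirSubalgebra z.2 j i).neg_left
    simpa only [Subalgebra.smul_def, Matrix.transpose_smul,
      matrix_mul_smul_of_commute hz] using Submodule.smul_mem _ z ih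

theorem GlEquivariant.transpose_neg_transpose_pow_mem (hM : GlEquivariant M M) (q : ℕ) :
    ((-Mᵀ) ^ q)ᵀ ∈ casimirSpan R M q := by
  induction q with
  | zero => simpa only [pow_zero, Matrix.transpose_one] using pow_mem_casimirSpan M (le_refl 0)
  | succ q ih =>
    simpa only [pow_succ', Matrix.transpose_transpose] using
      hM.transpose_neg_transpose_mul_transpose_mem ih

theorem statement11_general (R : Type*) [CommRing R] [Algebra R A] (hM : GlEquivariant M M)
    (q : ℕ) :
    ∃ b : ℕ → A, (∀ p, b p ∈ Algebra.adjoin R (Set.range fun j => (M ^ j).trace)) ∧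
      ∀ k l, ((-Mᵀ) ^ q) k l = ∑ p ∈ range (q + 1), b p * (M ^ p) l k := by
  have hspan := hM.transpose_neg_transpose_pow_mem (R := R) q
  obtain ⟨b, hb⟩ := Submodule.mem_span_image_finset_iff_exists_fun' _ |>.mp hspan
  refine ⟨fun p => b p, fun p => (b p).2, fun k l => ?_⟩
  rw [← Matrix.transpose_apply ((-Mᵀ) ^ q) l k, ← hb]
  simp [Matrix.sum_apply, Subalgebra.smul_def]

end Equivariance

section EnvelopingAlgebra

open scoped Matrix

theorem glEquivariant_of_lieHom {n R A : Type*} [Fintype n] [DecidableEq n] [CommRing R] [Ring A]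
    [Algebra R A] (f : Matrix n n R →ₗ⁅R⁆ A) :
    GlEquivariant (Matrix.of fun i j => f (Matrix.single i j 1))
      (Matrix.of fun i j => f (Matrix.single i j 1)) := by
  intro i j k l
  have single_mul : ∀ i j k l : n, Matrix.single i j (1 : R) * Matrix.single k l 1 =
      if j = k then Matrix.single i l 1 else 0 := by
    intro i j k l
    split_ifs with hjk
    · rw [hjk, Matrix.single_mul_single_same, mul_one]
    · exact Matrix.single_mul_single_of_ne _ _ _ _ hjk _
  simp only [Matrix.of_apply]
  rw [← LieHom.map_lie, Ring.lie_def, single_mul, single_mul, map_sub]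
  simp only [apply_ite f, map_zero, eq_comm (a := l)]

/-- The matrix of generators `e_{kl}`, whose powers have the entries `e_{kl}^q`. -/
noncomputable def generatorMatrix (m : ℕ) : Matrix (Fin m) (Fin m) (UEA m) :=
  Matrix.of E

variable {m : ℕ}

theorem glEquivariant_generatorMatrix : GlEquivariant (generatorMatrix m) (generatorMatrix m) :=
  glEquivariant_of_lieHom (UniversalEnvelopingAlgebra.ι ℂ)

theorem Epow_eq_generatorMatrix_pow (q : ℕ) (k l : Fin m) :
    Epow q k l = (generatorMatrix m ^ q) k l := by
  induction q generalizing k with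
  | zero => simp only [Epow, pow_zero, Matrix.one_apply]
  | succ q ih =>
    simp only [Epow, ih, pow_succ', Matrix.mul_apply, generatorMatrix, Matrix.of_apply]

theorem Etil_eq_neg_transpose_generatorMatrix_pow (q : ℕ) (k l : Fin m) :
    Etil q k l = ((-(generatorMatrix m)ᵀ) ^ q) k l := by
  induction q generalizing k with
  | zero => simp only [Etil, pow_zero, Matrix.one_apply]
  | succ q ih =>
    simp only [Etil, ih, pow_succ', Matrix.mul_apply, Matrix.neg_apply, Matrix.transpose_apply,
      generatorMatrix, Matrix.of_apply, neg_mul, sum_neg_distrib]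

theorem Cas_eq_trace_generatorMatrix_pow : Cas m = fun q => (generatorMatrix m ^ q).trace := by
  ext q
  simp only [Cas, Epow_eq_generatorMatrix_pow, Matrix.trace, Matrix.diag_apply]

end EnvelopingAlgebra

/-- for every `q` there are coefficients `b_{q,p}` (independent of `k,l`)
lying in the unital subalgebra generated by the Casimir elements, with
`ẽ_{kl}^q = Σ_{p=0}^q b_{q,p} e_{lk}^p`. -/
theorem statement11 (m : ℕ) (hm : 1 ≤ m) (q : ℕ) :
    ∃ b : ℕ → UEA m,
      (∀ p : ℕ, b p ∈ Algebra.adjoin ℂ (Set.range (Cas m))) ∧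
      ∀ k l : Fin m, Etil q k l = ∑ p ∈ Finset.range (q + 1), b p * Epow p l k := by
  simpa only [Epow_eq_generatorMatrix_pow, Etil_eq_neg_transpose_generatorMatrix_pow,
    Cas_eq_trace_generatorMatrix_pow] using statement11_general ℂ glEquivariant_generatorMatrix q
end
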